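/- Let U be a consistent c.e. theory and 𝒳 a set of sentences. The following are equivalent: (a) U is doubly 𝒳-generative; (b) U is 𝒳-theory-generative; (c) U is effectively if-essentially 𝒳-incomplete. -/

import Mathlib

open FirstOrder FirstOrder.Language

namespace PourEl

/-! ## Recursion-theoretic notions -/

/-- The `i`-th computably enumerable subset of `ℕ` (the domain of the `i`-th
partial computable function). -/
def WSet (i : ℕ) : Set ℕ :=
  {n | ((Denumerable.ofNat Nat.Partrec.Code i).eval n).Dom}

/-- A set of natural numbers is computably enumerable. -/
def CE (A : Set ℕ) : Prop := ∃ i, A = WSet i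

/-- A set of natural numbers is computable. -/
def Comp (A : Set ℕ) : Prop := ComputablePred (· ∈ A)

/-- Disjoint sets `X`, `Y` are computably separable iff some computable set
contains `X` and is disjoint from `Y`. -/
def CompSeparable (X Y : Set ℕ) : Prop :=
  ∃ Z : Set ℕ, Comp Z ∧ X ⊆ Z ∧ Y ∩ Z = ∅

/-- Computable inseparability. -/
def CompInseparable (X Y : Set ℕ) : Prop := ¬ CompSeparable X Y

/-- `Z` and `W` weakly biseparate `X` and `Y`. -/
def WeaklyBiseparate {α : Type*} (Z W X Y : Set α) : Prop :=
  X ⊆ Z ∧ Y ⊆ W ∧ Z ∩ Y = ∅ ∧ W ∩ X = ∅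

/-- `Z` and `W` biseparate `X` and `Y`. -/
def Biseparate {α : Type*} (Z W X Y : Set α) : Prop :=
  WeaklyBiseparate Z W X Y ∧ Z ∩ W = ∅

/-! ## Logical notions -/

variable {L : FirstOrder.Language}

/-- Provability: `φ` is a first-order consequence of `U` (by Gödel completeness,
semantic consequence). -/
def Prv (U : L.Theory) (φ : L.Sentence) : Prop := U ⊨ᵇ φ

/-- `U_p`: the set of theorems of `U`. -/
def Thms (U : L.Theory) : Set L.Sentence := {φ | Prv U φ}

/-- `U_r`: the set of refutable sentences of `U`. -/
def Refut (U : L.Theory) : Set L.Sentence := {φ | Prv U ∼φ}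

/-- Consistency: `U ⊬ ⊥`. -/
def Consistent (U : L.Theory) : Prop := ¬ Prv U ⊥

/-- `φ` is independent of `U`: `U` proves neither `φ` nor `¬φ`. -/
def Independent (U : L.Theory) (φ : L.Sentence) : Prop := ¬ Prv U φ ∧ ¬ Prv U ∼φ

/-- `U` is incomplete: some sentence is independent of it. -/
def Incomplete (U : L.Theory) : Prop := ∃ φ, Independent U φ

/-- Mono-consequence: `U ⊢_m φ` iff `ψ ⊢ φ` for some `ψ ∈ U`. -/
def MPrv (U : L.Theory) (φ : L.Sentence) : Prop := ∃ ψ ∈ U, Prv {ψ} φ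

/-- `U_m`: the set of mono-theorems of `U`. -/
def MThms (U : L.Theory) : Set L.Sentence := {φ | MPrv U φ}

/-- `U_n`: the set of mono-refutable sentences of `U`. -/
def MRefut (U : L.Theory) : Set L.Sentence := {φ | MPrv U ∼φ}

/-- Mono-consistency: every member is consistent by itself. -/
def MonoConsistent (U : L.Theory) : Prop := ∀ ψ ∈ U, Consistent ({ψ} : L.Theory)

/-- `Û`: the set of all non-empty finite conjunctions of elements of `U`. -/
def hat (U : L.Theory) : L.Theory :=
  {φ | ∃ (ψ : L.Sentence) (l : List L.Sentence),
    ψ ∈ U ∧ (∀ χ ∈ l, χ ∈ U) ∧ φ = l.foldl (· ⊓ ·) ψ}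

/-- `U ⋓ V`. -/
def Cup (U V : L.Theory) : L.Theory :=
  {χ | ∃ φ ∈ U, ∃ ψ ∈ V, χ = φ ⊓ ψ}

/-- `U ⋐ V`: for every `φ ∈ U` and `ψ ∈ V` there is `ρ ∈ V` with `ρ ⊢ φ ∧ ψ`. -/
def Ssub (U V : L.Theory) : Prop :=
  ∀ φ ∈ U, ∀ ψ ∈ V, ∃ ρ ∈ V, Prv {ρ} (φ ⊓ ψ)

/-! ## Gödel numbering -/

/-- A Gödel numbering of the sentences of a (countable) signature: a bijective
coding of sentences by natural numbers that is effective for the basic syntactic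
operations, and for which the theorems of a c.e. theory can be effectively
enumerated from an index of the theory. -/
structure Numbering (L : FirstOrder.Language) where
  equiv : L.Sentence ≃ ℕ
  neg_comp : Computable fun n => equiv ∼(equiv.symm n)
  inf_comp : Computable₂ fun m n => equiv (equiv.symm m ⊓ equiv.symm n)
  imp_comp : Computable₂ fun m n => equiv (equiv.symm m ⟹ equiv.symm n)
  iff_comp : Computable₂ fun m n => equiv (equiv.symm m ⇔ equiv.symm n)
  thmIdx : ℕ → ℕ
  thmIdx_comp : Computable thmIdx
  thmIdx_spec : ∀ i, WSet (thmIdx i) = equiv '' Thms (equiv.symm '' WSet i)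

namespace Numbering

variable (g : Numbering L)

/-- The code of a sentence. -/
def code (φ : L.Sentence) : ℕ := g.equiv φ

/-- The set of codes of a set of sentences. -/
def codes (S : Set L.Sentence) : Set ℕ := g.equiv '' S

/-- The theory axiomatised by the `i`-th c.e. set (identified with a set of
sentences via the numbering). -/
def thy (i : ℕ) : L.Theory := g.equiv.symm '' WSet i

/-- The theory `U` is computably enumerable (with respect to the numbering). -/
def CEThy (U : L.Theory) : Prop := CE (g.codes U)

end Numbering


/-- `Φ` witnesses that `U` is effectively if-essentially `F`-incomplete: whenever
`W i` is a consistent finite extension of `U` (as a set of axioms), `Φ i`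
converges to (the code of) a sentence in `F (W i)` independent of `W i`. -/
def IfEssWitness (g : Numbering L) (U : L.Theory)
    (F : Set L.Sentence → Set L.Sentence) (Φ : ℕ →. ℕ) : Prop :=
  ∀ i, (∃ Γ : Finset L.Sentence, g.thy i = U ∪ (Γ : Set L.Sentence)) →
    Consistent (g.thy i) →
    ∃ n ∈ Φ i, ∃ φ : L.Sentence, g.code φ = n ∧ φ ∈ F (g.thy i) ∧ Independent (g.thy i) φ

/-- `U` is effectively if-essentially `F`-incomplete. -/
def EffIfEssIncomplete (g : Numbering L) (U : L.Theory)
    (F : Set L.Sentence → Set L.Sentence) : Prop :=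
  ∃ Φ : ℕ →. ℕ, Partrec Φ ∧ IfEssWitness g U F Φ

/-- `U` is doubly `X`-generative. -/
def DoublyXGenerative (g : Numbering L) (U : L.Theory) (X : Set L.Sentence) : Prop :=
  ∃ Φ : ℕ → ℕ → ℕ, Computable₂ Φ ∧ ∀ i j, WSet i ∩ WSet j = ∅ →
    (Φ i j ∈ g.codes (Thms U) ↔ Φ i j ∈ WSet j) ∧
    (Φ i j ∈ g.codes (Refut U) ↔ Φ i j ∈ WSet i) ∧
    (Φ i j ∉ WSet i ∪ WSet j → Φ i j ∈ g.codes X)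

/-- `U` is `X`-theory-generative. -/
def XTheoryGenerative (g : Numbering L) (U : L.Theory) (X : Set L.Sentence) : Prop :=
  ∃ Ψ : ℕ → ℕ, Computable Ψ ∧ ∀ i, Consistent (g.thy i) →
    (Ψ i ∈ g.codes (Thms U) ↔ Ψ i ∈ g.codes (Refut (g.thy i))) ∧
    (Ψ i ∈ g.codes (Refut U) ↔ Ψ i ∈ g.codes (Thms (g.thy i))) ∧
    (Ψ i ∉ g.codes (Thms (g.thy i)) ∪ g.codes (Refut (g.thy i)) → Ψ i ∈ g.codes X)

/-! ## Helper lemmas -/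

open Nat.Partrec (Code)

theorem Prv.mono' {U V : L.Theory} (h : U ⊆ V) {φ : L.Sentence} (hp : Prv U φ) : Prv V φ := by
  unfold Prv at *
  rw [Theory.models_sentence_iff]
  intro M
  haveI : M ⊨ U := Theory.Model.mono M.is_model h
  exact hp.realize_sentence M

theorem Prv.absurd' {U : L.Theory} {φ : L.Sentence} (h : Prv U φ) (h' : Prv U ∼φ) : Prv U ⊥ := by
  unfold Prv at *
  rw [Theory.models_sentence_iff] at *
  intro M
  exact absurd (h M) ((Sentence.realize_not M).1 (h' M))

theorem not_of_inconsistent {U : L.Theory} {φ : L.Sentence} (h : Prv (U ∪ {φ}) ⊥) :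
    Prv U ∼φ := by
  unfold Prv at *
  rw [Theory.models_sentence_iff]
  intro M
  refine (Sentence.realize_not M).2 fun hM => ?_
  haveI : M ⊨ (U ∪ {φ} : L.Theory) :=
    Theory.Model.union M.is_model (Theory.model_singleton_iff.2 hM)
  exact h.realize_sentence M

theorem of_inconsistent_not {U : L.Theory} {φ : L.Sentence} (h : Prv (U ∪ {∼φ}) ⊥) :
    Prv U φ := by
  unfold Prv at *
  rw [Theory.models_sentence_iff]
  intro M
  by_contra hM
  haveI : M ⊨ (U ∪ {∼φ} : L.Theory) :=
    Theory.Model.union M.is_model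
      (Theory.model_singleton_iff.2 ((Sentence.realize_not M).2 hM))
  exact h.realize_sentence M

theorem Numbering.mem_codes (g : Numbering L) (S : Set L.Sentence) (n : ℕ) :
    n ∈ g.codes S ↔ g.equiv.symm n ∈ S := by
  unfold Numbering.codes
  constructor
  · rintro ⟨φ, h, rfl⟩
    simpa using h
  · intro h
    exact ⟨_, h, by simp⟩

theorem Numbering.mem_thy (g : Numbering L) (i : ℕ) (φ : L.Sentence) :
    φ ∈ g.thy i ↔ g.equiv φ ∈ WSet i := by
  unfold Numbering.thy
  constructor
  · rintro ⟨n, h, rfl⟩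
    simpa using h
  · intro h
    exact ⟨_, h, by simp⟩

theorem partrec_W : Partrec₂ fun i n : ℕ => (Denumerable.ofNat Code i).eval n :=
  Code.eval_part.comp ((Computable.ofNat Code).comp Computable.fst) Computable.snd

/-- Indices of preimages under a computable function. -/
theorem exists_preimage_idx (f : ℕ → ℕ) (hf : Computable f) :
    ∃ r : ℕ → ℕ, Computable r ∧ ∀ i n, n ∈ WSet (r i) ↔ f n ∈ WSet i := by
  have h : Partrec fun p : ℕ =>
      (Denumerable.ofNat Code p.unpair.1).eval (f p.unpair.2) :=
    partrec_W.comp (Computable.fst.comp Computable.unpair)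
      (hf.comp (Computable.snd.comp Computable.unpair))
  obtain ⟨c, hc⟩ := Code.exists_code.1 (Partrec.nat_iff.1 h)
  refine ⟨fun i => Encodable.encode (Code.curry c i),
    Computable.encode.comp
      (Code.primrec₂_curry.to_comp.comp (Computable.const c) Computable.id), fun i n => ?_⟩
  simp [WSet, Code.eval_curry, hc]

/-- The guard: defined iff `m = n`. -/
def guardEq (m n : ℕ) : Part ℕ := cond (decide (m = n)) (Part.some 0) Part.none

theorem guardEq_dom (m n : ℕ) : (guardEq m n).Dom ↔ m = n := by
  unfold guardEq
  by_cases h : m = n <;> simp [h]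

theorem guardEq_partrec : Partrec₂ guardEq :=
  Partrec.cond (Primrec.eq.decide.to_comp : Computable₂ fun m n : ℕ => decide (m = n))
    (Computable.const 0).partrec Partrec.none

/-- Given a partial computable `Φ`, defined iff `Φ` converges at `(code of) c` to an `n ∈ W_i`
with `f n = m`. -/
theorem partrec_branch (Φ : ℕ →. ℕ) (hΦ : Partrec Φ) (f : ℕ → ℕ) (hf : Computable f) :
    Partrec fun q : ℕ × ℕ × ℕ => (Φ q.1).bind fun n =>
      ((Denumerable.ofNat Code q.2.1).eval n).bind fun _ => guardEq q.2.2 (f n) := by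
  refine Partrec.bind (hΦ.comp Computable.fst) ?_
  refine Partrec.bind (partrec_W.comp
    (Computable.fst.comp (Computable.snd.comp Computable.fst)) Computable.snd) ?_
  exact guardEq_partrec.comp
    (Computable.snd.comp (Computable.snd.comp (Computable.fst.comp Computable.fst)))
    (hf.comp (Computable.snd.comp Computable.fst))

theorem branch_dom (Φ : ℕ →. ℕ) (f : ℕ → ℕ) (e i m : ℕ) :
    ((Φ e).bind fun n =>
      ((Denumerable.ofNat Code i).eval n).bind fun _ => guardEq m (f n)).Dom ↔
    ∃ n ∈ Φ e, n ∈ WSet i ∧ m = f n := by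
  simp only [Part.dom_iff_mem, Part.mem_bind_iff, WSet, Set.mem_setOf_eq, ← guardEq_dom]
  constructor
  · rintro ⟨y, n, hn, z, hz, hy⟩
    exact ⟨n, hn, ⟨z, hz⟩, ⟨y, hy⟩⟩
  · rintro ⟨n, hn, ⟨z, hz⟩, ⟨y, hy⟩⟩
    exact ⟨y, n, hn, z, hz, hy⟩

/-- The self-referential family of indices. -/
theorem exists_rec_idx (u : ℕ) (Φ : ℕ →. ℕ) (hΦ : Partrec Φ) (f : ℕ → ℕ) (hf : Computable f) :
    ∃ e : ℕ → ℕ → ℕ, Computable₂ e ∧ ∀ i j m, m ∈ WSet (e i j) ↔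
      m ∈ WSet u ∨ (∃ n ∈ Φ (e i j), n ∈ WSet i ∧ m = n) ∨
        (∃ n ∈ Φ (e i j), n ∈ WSet j ∧ m = f n) := by
  have hE : Computable fun q : Code × ℕ => Encodable.encode (Code.curry q.1 q.2.unpair.1) :=
    Computable.encode.comp (Code.primrec₂_curry.to_comp.comp Computable.fst
      (Computable.fst.comp (Computable.unpair.comp Computable.snd)))
  have hm : Computable fun q : Code × ℕ => q.2.unpair.2 :=
    Computable.snd.comp (Computable.unpair.comp Computable.snd)
  have hi : Computable fun q : Code × ℕ => q.2.unpair.1.unpair.1 :=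
    Computable.fst.comp (Computable.unpair.comp
      (Computable.fst.comp (Computable.unpair.comp Computable.snd)))
  have hj : Computable fun q : Code × ℕ => q.2.unpair.1.unpair.2 :=
    Computable.snd.comp (Computable.unpair.comp
      (Computable.fst.comp (Computable.unpair.comp Computable.snd)))
  have h1 := (partrec_branch Φ hΦ id Computable.id).comp (hE.pair (hi.pair hm))
  have h2 := (partrec_branch Φ hΦ f hf).comp (hE.pair (hj.pair hm))
  have h0 := partrec_W.comp (Computable.const u) hm
  obtain ⟨k1, hk1, H1⟩ := Partrec.merge' h1 h2
  obtain ⟨k, hk, H⟩ := Partrec.merge' h0 hk1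
  obtain ⟨c, hc⟩ := Code.fixed_point₂ (f := fun c n => k (c, n)) hk
  refine ⟨fun i j => Encodable.encode (Code.curry c (Nat.pair i j)),
    Computable.encode.comp (Code.primrec₂_curry.to_comp.comp (Computable.const c)
      Primrec₂.natPair.to_comp), fun i j m => ?_⟩
  have key : m ∈ WSet (Encodable.encode (Code.curry c (Nat.pair i j))) ↔
      (k (c, Nat.pair (Nat.pair i j) m)).Dom := by
    simp only [WSet, Set.mem_setOf_eq, Denumerable.ofNat_encode, Code.eval_curry, hc]
  rw [key, (H _).2, (H1 _).2]
  simp only [branch_dom, Nat.unpair_pair, id]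
  rfl


/-- For a consistent c.e. theory `U` and a set `X` of
sentences, the following are equivalent: (a) `U` is doubly `X`-generative;
(b) `U` is `X`-theory-generative; (c) `U` is effectively if-essentially
`X`-incomplete. -/
theorem statement11 {L : FirstOrder.Language} (g : Numbering L) (U : L.Theory)
    (hU : g.CEThy U) (hcon : Consistent U) (X : Set L.Sentence) :
    [DoublyXGenerative g U X,
     XTheoryGenerative g U X,
     EffIfEssIncomplete g U (fun _ => X)].TFAE := by
  tfae_have 1 → 2 := by
    rintro ⟨Φ, hΦ, H⟩
    obtain ⟨r, hr, hr'⟩ := exists_preimage_idx _ g.neg_comp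
    have hp : ∀ i, WSet (g.thmIdx i) = g.codes (Thms (g.thy i)) := g.thmIdx_spec
    have hq : ∀ i, WSet (r (g.thmIdx i)) = g.codes (Refut (g.thy i)) := by
      intro i
      ext n
      rw [hr', hp, g.mem_codes, g.mem_codes]
      simp [Thms, Refut]
    refine ⟨fun i => Φ (g.thmIdx i) (r (g.thmIdx i)),
      hΦ.comp g.thmIdx_comp (hr.comp g.thmIdx_comp), fun i hi => ?_⟩
    have hd : WSet (g.thmIdx i) ∩ WSet (r (g.thmIdx i)) = ∅ := by
      rw [hp, hq]
      ext n
      simp only [Set.mem_inter_iff, g.mem_codes, Set.mem_empty_iff_false, iff_false]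
      rintro ⟨h1, h2⟩
      exact hi (Prv.absurd' h1 h2)
    have := H _ _ hd
    rw [hp, hq] at this
    exact this
  tfae_have 2 → 3 := by
    rintro ⟨Ψ, hΨ, H⟩
    refine ⟨fun i => Part.some (Ψ i), hΨ.partrec, ?_⟩
    rintro i ⟨Γ, hΓ⟩ hi
    have hsub : U ⊆ g.thy i := hΓ ▸ Set.subset_union_left
    obtain ⟨h1, h2, h3⟩ := H i hi
    simp only [g.mem_codes, Set.mem_union] at h1 h2 h3
    have n1 : ¬ Prv (g.thy i) (g.equiv.symm (Ψ i)) := fun h =>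
      hi (Prv.absurd' h (Prv.mono' hsub (h2.2 h)))
    have n2 : ¬ Prv (g.thy i) ∼(g.equiv.symm (Ψ i)) := fun h =>
      hi (Prv.absurd' (Prv.mono' hsub (h1.2 h)) h)
    exact ⟨Ψ i, Part.mem_some _, g.equiv.symm (Ψ i), by simp [Numbering.code],
      h3 (fun h => h.elim n1 n2), n1, n2⟩
  tfae_have 3 → 1 := by
    rintro ⟨Φ, hΦ, H⟩
    obtain ⟨u, hu⟩ := hU
    obtain ⟨e, he, hW⟩ := exists_rec_idx u Φ hΦ _ g.neg_comp
    have hUu : ∀ φ, g.equiv φ ∈ WSet u ↔ φ ∈ U := by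
      intro φ
      rw [← hu, g.mem_codes]
      simp
    have hthy : ∀ i j φ, φ ∈ g.thy (e i j) ↔ φ ∈ U ∨
        (∃ n ∈ Φ (e i j), n ∈ WSet i ∧ φ = g.equiv.symm n) ∨
        (∃ n ∈ Φ (e i j), n ∈ WSet j ∧ φ = ∼(g.equiv.symm n)) := by
      intro i j φ
      rw [g.mem_thy, hW, hUu]
      simp only [Equiv.eq_symm_apply, EmbeddingLike.apply_eq_iff_eq]
    -- the theory is `U` if no axiom is added
    have hbase : ∀ i j, (∀ n ∈ Φ (e i j), n ∉ WSet i ∧ n ∉ WSet j) → g.thy (e i j) = U := by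
      intro i j h
      ext φ
      rw [hthy]
      constructor
      · rintro (h' | ⟨n, hn, h', -⟩ | ⟨n, hn, h', -⟩)
        · exact h'
        · exact absurd h' (h n hn).1
        · exact absurd h' (h n hn).2
      · exact Or.inl
    have htot : ∀ i j, (Φ (e i j)).Dom := by
      intro i j
      by_contra hd
      have hno : ∀ n, n ∉ Φ (e i j) := fun n hn => hd (Part.dom_iff_mem.2 ⟨n, hn⟩)
      have hb := hbase i j fun n hn => absurd hn (hno n)
      obtain ⟨n, hn, -⟩ := H (e i j) ⟨∅, by simp [hb]⟩ (by rw [hb]; exact hcon)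
      exact hno n hn
    have hcomp : Partrec₂ fun i j => Φ (e i j) := hΦ.comp he
    refine ⟨fun i j => (Φ (e i j)).get (htot i j), ?_, fun i j hij => ?_⟩
    · refine Partrec.of_eq hcomp ?_
      rintro ⟨i, j⟩
      exact (Part.some_get (htot i j)).symm
    · have hmem := Part.get_mem (htot i j)
      beta_reduce
      generalize (Φ (e i j)).get (htot i j) = n at hmem ⊢
      have huniq : ∀ n', n' ∈ Φ (e i j) → n' = n := fun n' h => Part.mem_unique h hmem
      have hdis : ∀ k, k ∈ WSet i → k ∉ WSet j := fun k h1 h2 => by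
        have : k ∈ WSet i ∩ WSet j := ⟨h1, h2⟩
        rw [hij] at this
        exact this
      obtain ⟨φ, rfl⟩ := g.equiv.surjective n
      have hind : ∀ Γ : Finset L.Sentence, g.thy (e i j) = U ∪ (Γ : Set L.Sentence) →
          Consistent (g.thy (e i j)) → φ ∈ X ∧ Independent (g.thy (e i j)) φ := by
        intro Γ hΓ hc
        obtain ⟨n, hn, ψ, hψ, h1, h2⟩ := H (e i j) ⟨Γ, hΓ⟩ hc
        have : ψ = φ := g.equiv.injective (by rw [← huniq n hn]; exact hψ)
        subst this
        exact ⟨h1, h2⟩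
      simp only [g.mem_codes, Equiv.symm_apply_apply, Set.mem_union]
      have hI : g.equiv φ ∈ WSet i → Prv U ∼φ := by
        intro h
        have ht : g.thy (e i j) = U ∪ {φ} := by
          ext ψ
          rw [hthy]
          constructor
          · rintro (h' | ⟨n, hn, h', rfl⟩ | ⟨n, hn, h', rfl⟩)
            · exact Or.inl h'
            · rw [huniq n hn]; right; simp
            · rw [huniq n hn] at h'; exact absurd h' (hdis _ h)
          · rintro (h' | h')
            · exact Or.inl h'
            · rw [Set.mem_singleton_iff] at h'
              subst h'
              exact Or.inr (Or.inl ⟨_, hmem, h, by simp⟩)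
        by_contra hn
        have hc : Consistent (g.thy (e i j)) := by
          rw [ht]
          exact fun hb => hn (not_of_inconsistent hb)
        refine (hind {φ} (by simpa using ht) hc).2.1 ?_
        rw [ht]
        exact Theory.models_sentence_of_mem (Or.inr rfl)
      have hJ : g.equiv φ ∈ WSet j → Prv U φ := by
        intro h
        have ht : g.thy (e i j) = U ∪ {∼φ} := by
          ext ψ
          rw [hthy]
          constructor
          · rintro (h' | ⟨n, hn, h', rfl⟩ | ⟨n, hn, h', rfl⟩)
            · exact Or.inl h'
            · rw [huniq n hn] at h'; exact absurd h (hdis _ h')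
            · rw [huniq n hn]; right; simp
          · rintro (h' | h')
            · exact Or.inl h'
            · rw [Set.mem_singleton_iff] at h'
              subst h'
              exact Or.inr (Or.inr ⟨_, hmem, h, by simp⟩)
        by_contra hn
        have hc : Consistent (g.thy (e i j)) := by
          rw [ht]
          exact fun hb => hn (of_inconsistent_not hb)
        refine (hind {∼φ} (by simpa using ht) hc).2.2 ?_
        rw [ht]
        exact Theory.models_sentence_of_mem (Or.inr rfl)
      have hN : g.equiv φ ∉ WSet i → g.equiv φ ∉ WSet j → φ ∈ X ∧ Independent U φ := by
        intro h1 h2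
        have hb := hbase i j fun n hn => by rw [huniq n hn]; exact ⟨h1, h2⟩
        have := hind ∅ (by simp [hb]) (by rw [hb]; exact hcon)
        rwa [hb] at this
      refine ⟨⟨fun h => ?_, hJ⟩, ⟨fun h => ?_, hI⟩, fun h => ?_⟩
      · by_contra hj
        by_cases hi : g.equiv φ ∈ WSet i
        · exact hcon (Prv.absurd' h (hI hi))
        · exact (hN hi hj).2.1 h
      · by_contra hi
        by_cases hj : g.equiv φ ∈ WSet j
        · exact hcon (Prv.absurd' (hJ hj) h)
        · exact (hN hi hj).2.2 h
      · push Not at h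
        exact (hN h.1 h.2).1
  tfae_finish

end PourEl
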